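/- arXiv:2105.07056 — 2 statements merged into one kernel-verified Lean document; each statement's English description precedes it below -/
import Mathlib

section
/- For every integer s ≥ 1 and every filter function ρ there exists a constant c > 0, depending only on s and ρ, such that for every 2π-periodic function f : ℝ → ℂ of class C^s, every even integer N ≥ 2 (with h = 2π/N), and every grid index i ∈ {−N/2+1, …, N/2}, the filtered samples satisfy |(f(α_·)^p)(α_i) − f(α_i)| ≤ c h^{s−1/2} ‖f‖_s. -/
open scoped BigOperators
open Finset

noncomputable section

/-- Grid spacing `h = 2π/N`. -/
def hgrid (N : ℤ) : ℝ := 2 * Real.pi / N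

/-- Grid points `α_j = j h`. -/
def gridPt (N : ℤ) (j : ℤ) : ℝ := j * hgrid N

/-- Index set `{-N/2+1, …, N/2}`. -/
def idxs (N : ℤ) : Finset ℤ := Finset.Icc (-(N / 2) + 1) (N / 2)

/-- Discrete Fourier coefficient `f̂_k`. -/
def dft (N : ℤ) (f : ℤ → ℂ) (k : ℤ) : ℂ :=
  (N : ℂ)⁻¹ * ∑ j ∈ idxs N, f j * Complex.exp (-(Complex.I * (k : ℂ) * (gridPt N j : ℂ)))

/-- Reconstruction of a discrete function from Fourier coefficients. -/
def idft (N : ℤ) (c : ℤ → ℂ) (j : ℤ) : ℂ :=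
  ∑ k ∈ idxs N, c k * Complex.exp (Complex.I * (k : ℂ) * (gridPt N j : ℂ))

/-- The pseudo-spectral derivative `S_h`. -/
def Sh (N : ℤ) (f : ℤ → ℂ) : ℤ → ℂ :=
  idft N fun k => if k = N / 2 then 0 else Complex.I * (k : ℂ) * dft N f k

/-- The pseudo-spectral antiderivative `S_h⁻¹`. -/
def Shinv (N : ℤ) (f : ℤ → ℂ) : ℤ → ℂ :=
  idft N fun k => if k = 0 then 0 else dft N f k / (Complex.I * (k : ℂ))

/-- The filtered discrete function `f^p`. -/
def filterP (N : ℤ) (ρ : ℝ → ℝ) (f : ℤ → ℂ) : ℤ → ℂ :=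
  idft N fun k => (ρ (gridPt N k) : ℂ) * dft N f k

/-- The filtered derivative `D_h`. -/
def Dh (N : ℤ) (ρ : ℝ → ℝ) (f : ℤ → ℂ) : ℤ → ℂ :=
  idft N fun k => Complex.I * (k : ℂ) * (ρ (gridPt N k) : ℂ) * dft N f k

/-- Discrete `l²` norm. -/
def l2norm (N : ℤ) (f : ℤ → ℂ) : ℝ :=
  Real.sqrt (hgrid N * ∑ j ∈ idxs N, ‖f j‖ ^ 2)

/-- Discrete Hilbert transform `H_h`. -/
def Hh (N : ℤ) (f : ℤ → ℂ) (i : ℤ) : ℂ :=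
  ((hgrid N / Real.pi : ℝ) : ℂ) *
    ∑ j ∈ (idxs N).filter (fun j => Odd (j - i)),
      f j * (Real.cot ((gridPt N i - gridPt N j) / 2) : ℂ)

/-- Discrete inner product `(f,g)_h`. -/
def dip (N : ℤ) (f g : ℤ → ℂ) : ℂ :=
  (hgrid N : ℂ) * ∑ j ∈ idxs N, (starRingEnd ℂ) (f j) * g j

/-- Discrete mean `⟨f⟩_h`. -/
def dmean (N : ℤ) (f : ℤ → ℂ) : ℂ :=
  (N : ℂ)⁻¹ * ∑ j ∈ idxs N, f j

/-- The discrete function of samples of a periodic function. -/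
def samples (N : ℤ) (f : ℝ → ℂ) : ℤ → ℂ := fun j => f (gridPt N j)

/-- Fourier coefficient of a `2π`-periodic function. -/
def fourierCoeffP (f : ℝ → ℂ) (k : ℤ) : ℂ :=
  ((2 * Real.pi)⁻¹ : ℝ) * ∫ α in (-Real.pi)..Real.pi, f α * Complex.exp (-(Complex.I * (k : ℂ) * (α : ℂ)))

/-- Sobolev norm `‖f‖_s`. -/
def sobolevNorm (s : ℕ) (f : ℝ → ℂ) : ℝ :=
  Real.sqrt (∑' k : ℤ, (1 + (k : ℝ) ^ 2) ^ s * ‖fourierCoeffP f k‖ ^ 2)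

/-- A filter (cutoff) function for numerical filtering. -/
structure IsFilter (ρ : ℝ → ℝ) : Prop where
  even : ∀ x, ρ (-x) = ρ x
  nonneg : ∀ x, 0 ≤ ρ x
  smooth : ∃ r : ℕ, 2 < r ∧ ContDiff ℝ r ρ
  zero_at_pi : ρ Real.pi = 0
  zero_at_neg_pi : ρ (-Real.pi) = 0
  deriv_zero_at_pi : deriv ρ Real.pi = 0
  deriv_zero_at_neg_pi : deriv ρ (-Real.pi) = 0
  one_near_zero : ∃ μ : ℝ, 0 < μ ∧ μ < 1 ∧ ∀ x : ℝ, |x| ≤ μ * Real.pi → ρ x = 1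

section FourierSeries

open Real Complex MeasureTheory

lemma fourierCoeffP_eq_fourierCoeff [Fact (0 < 2 * π)] (g : AddCircle (2 * π) → ℂ) (k : ℤ) :
    fourierCoeffP (fun x : ℝ => g x) k = fourierCoeff g k := by
  rw [fourierCoeff_eq_intervalIntegral g k (-π), fourierCoeffP,
    show -π + 2 * π = π by ring, Complex.real_smul, one_div]
  congr 1
  refine intervalIntegral.integral_congr fun x _ => ?_
  have hπ : (π : ℂ) ≠ 0 := by exact_mod_cast Real.pi_ne_zero
  simp only [fourier_coe_apply, smul_eq_mul]
  rw [mul_comm]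
  congr 2
  push_cast
  field_simp

lemma summable_sq_fourierCoeffP {g : ℝ → ℂ} (hg : Function.Periodic g (2 * π))
    (hc : Continuous g) : Summable fun k : ℤ => ‖fourierCoeffP g k‖ ^ 2 := by
  have : Fact (0 < 2 * π) := ⟨Real.two_pi_pos⟩
  let G : C(AddCircle (2 * π), ℂ) := ⟨hg.lift, continuous_coinduced_dom.mpr hc⟩
  have h := (hasSum_sq_fourierCoeff (ContinuousMap.toLp 2 AddCircle.haarAddCircle ℂ G)).summable
  refine h.congr fun k => ?_
  rw [fourierCoeff_toLp, ← fourierCoeffP_eq_fourierCoeff]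
  rfl

lemma hasSum_fourierCoeffP {g : ℝ → ℂ} (hg : Function.Periodic g (2 * π))
    (hc : Continuous g) (hs : Summable (fourierCoeffP g)) (x : ℝ) :
    HasSum (fun k : ℤ => fourierCoeffP g k * Complex.exp (I * k * x)) (g x) := by
  have : Fact (0 < 2 * π) := ⟨Real.two_pi_pos⟩
  let G : C(AddCircle (2 * π), ℂ) := ⟨hg.lift, continuous_coinduced_dom.mpr hc⟩
  have hG : fourierCoeff G = fourierCoeffP g := by
    funext k
    rw [← fourierCoeffP_eq_fourierCoeff]
    rfl
  have hπ : (π : ℂ) ≠ 0 := by exact_mod_cast Real.pi_ne_zero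
  have h := has_pointwise_sum_fourier_series_of_summable (f := G) (hG ▸ hs) (x : AddCircle (2 * π))
  simp only [hG, smul_eq_mul, fourier_coe_apply] at h
  have hterm (k : ℤ) : Complex.exp (I * k * x) =
      Complex.exp (2 * π * I * k * x / ((2 * π : ℝ) : ℂ)) := by
    congr 1
    push_cast
    field_simp
  simp_rw [hterm]
  exact h

lemma fourierCoeffP_deriv {g : ℝ → ℂ} (hg : Function.Periodic g (2 * π))
    (hc : ContDiff ℝ 1 g) (k : ℤ) : fourierCoeffP (deriv g) k = I * k * fourierCoeffP g k := by
  have hexp (x : ℝ) : HasDerivAt (fun x : ℝ => Complex.exp (-(I * k * x)))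
      (Complex.exp (-(I * k * x)) * -(I * k * 1)) x :=
    (((hasDerivAt_id x).ofReal_comp.const_mul (I * (k : ℂ))).neg).cexp
  have hd (x : ℝ) : HasDerivAt g (deriv g x) x := (hc.differentiable one_ne_zero x).hasDerivAt
  have hcd : Continuous (deriv g) := hc.continuous_deriv le_rfl
  have hcg : Continuous g := hc.continuous
  have hper : g π = g (-π) := by rw [← hg (-π)]; ring_nf
  have hexp_per : Complex.exp (-(I * k * (π : ℝ))) = Complex.exp (-(I * k * ((-π : ℝ) : ℂ))) := by
    rw [Complex.exp_eq_exp_iff_exists_int]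
    exact ⟨-k, by push_cast; ring⟩
  have h := intervalIntegral.integral_deriv_mul_eq_sub (a := -π) (b := π) (fun x _ => hd x)
    (fun x _ => hexp x) (hcd.intervalIntegrable _ _)
    (Continuous.intervalIntegrable (by fun_prop) _ _)
  rw [hper, hexp_per, sub_self, intervalIntegral.integral_add
    (Continuous.intervalIntegrable (by fun_prop) _ _)
    (Continuous.intervalIntegrable (by fun_prop) _ _)] at h
  have h' : (∫ x in (-π)..π, g x * (Complex.exp (-(I * k * x)) * -(I * k * 1)))
      = -(I * k) * ∫ x in (-π)..π, g x * Complex.exp (-(I * k * x)) := by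
    rw [← intervalIntegral.integral_const_mul]
    exact intervalIntegral.integral_congr fun x _ => by ring
  rw [h'] at h
  simp only [fourierCoeffP]
  linear_combination (((2 * π)⁻¹ : ℝ) : ℂ) * h

lemma periodic_iteratedDeriv {g : ℝ → ℂ} {c : ℝ} (hg : Function.Periodic g c) (n : ℕ) :
    Function.Periodic (iteratedDeriv n g) c := fun x => by
  have h := congrFun (iteratedDeriv_comp_add_const n g c) x
  rw [show (fun z => g (z + c)) = g from funext hg] at h
  exact h.symm

lemma fourierCoeffP_iteratedDeriv {g : ℝ → ℂ} (hg : Function.Periodic g (2 * π)) (n : ℕ)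
    (hc : ContDiff ℝ n g) (k : ℤ) :
    fourierCoeffP (iteratedDeriv n g) k = (I * k) ^ n * fourierCoeffP g k := by
  induction n with
  | zero => simp
  | succ n ih =>
    rw [iteratedDeriv_succ, fourierCoeffP_deriv (periodic_iteratedDeriv hg n)
      (by rw [iteratedDeriv_eq_iterate]
          exact ContDiff.iterate_deriv' 1 n (by rwa [add_comm])),
      ih (hc.of_le (by exact_mod_cast n.le_succ))]
    ring

lemma summable_sobolev {g : ℝ → ℂ} (hg : Function.Periodic g (2 * π)) (s : ℕ)
    (hc : ContDiff ℝ s g) :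
    Summable fun k : ℤ => (1 + (k : ℝ) ^ 2) ^ s * ‖fourierCoeffP g k‖ ^ 2 := by
  have h0 := summable_sq_fourierCoeffP hg hc.continuous
  have h1 := summable_sq_fourierCoeffP (periodic_iteratedDeriv hg s)
    (hc.continuous_iteratedDeriv s le_rfl)
  refine Summable.of_nonneg_of_le (fun k => by positivity) (fun k => ?_)
    ((h0.add h1).mul_left (2 ^ s : ℝ))
  rw [fourierCoeffP_iteratedDeriv hg s hc]
  simp only [norm_mul, norm_pow, Complex.norm_I, one_mul, Complex.norm_intCast, mul_pow, one_pow]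
  rw [← pow_mul |(k : ℝ)|, mul_comm s 2, pow_mul, sq_abs, ← one_add_mul, ← mul_assoc]
  gcongr
  by_cases hk : k = 0
  · subst hk
    have : (1 : ℝ) ≤ 2 ^ s := one_le_pow₀ (by norm_num)
    simp only [Int.cast_zero, ne_eq, OfNat.ofNat_ne_zero, not_false_eq_true, zero_pow, add_zero,
      one_pow]
    nlinarith [pow_nonneg (le_refl (0 : ℝ)) s]
  · have hk1 : (1 : ℝ) ≤ (k : ℝ) ^ 2 := by
      exact_mod_cast Int.add_one_le_of_lt (by positivity : (0 : ℤ) < k ^ 2)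
    calc (1 + (k : ℝ) ^ 2) ^ s ≤ (2 * (k : ℝ) ^ 2) ^ s := by gcongr; linarith
      _ = 2 ^ s * ((k : ℝ) ^ 2) ^ s := mul_pow ..
      _ ≤ _ := by gcongr; linarith

end FourierSeries

lemma sum_int_inv_sq_le (F : Finset ℤ) {K : ℝ} (hK : 0 < K) (hF : ∀ m ∈ F, K < |(m : ℝ)|) :
    ∑ m ∈ F, ((m : ℝ) ^ 2)⁻¹ ≤ 4 / K := by
  set n := F.sup Int.natAbs + 1
  set A := Ioo ⌊K⌋₊ n
  have hsub : F ⊆ A.image (fun i : ℕ => (i : ℤ)) ∪ A.image (fun i : ℕ => -(i : ℤ)) := by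
    intro m hm
    have h1 : m.natAbs ∈ A := by
      refine Finset.mem_Ioo.2 ⟨(Nat.floor_lt hK.le).2 ?_, Nat.lt_succ_of_le (le_sup hm)⟩
      simpa [Nat.cast_natAbs] using hF m hm
    simp only [mem_union, mem_image]
    rcases Int.natAbs_eq m with h | h
    · exact Or.inl ⟨_, h1, h.symm⟩
    · exact Or.inr ⟨_, h1, h.symm⟩
  have hA : ∑ i ∈ A, ((i : ℝ) ^ 2)⁻¹ ≤ 2 / K :=
    (sum_Ioo_inv_sq_le _ _).trans (by gcongr; exact (Nat.lt_floor_add_one K).le)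
  calc ∑ m ∈ F, ((m : ℝ) ^ 2)⁻¹
      ≤ ∑ m ∈ A.image (fun i : ℕ => (i : ℤ)) ∪ A.image (fun i : ℕ => -(i : ℤ)),
          ((m : ℝ) ^ 2)⁻¹ := sum_le_sum_of_subset_of_nonneg hsub fun _ _ _ => by positivity
    _ ≤ ∑ m ∈ A.image (fun i : ℕ => (i : ℤ)), ((m : ℝ) ^ 2)⁻¹
          + ∑ m ∈ A.image (fun i : ℕ => -(i : ℤ)), ((m : ℝ) ^ 2)⁻¹ := by
        rw [← sum_union_inter]
        exact le_add_of_nonneg_right (sum_nonneg fun _ _ => by positivity)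
    _ = ∑ i ∈ A, ((i : ℝ) ^ 2)⁻¹ + ∑ i ∈ A, ((i : ℝ) ^ 2)⁻¹ := by
        rw [sum_image (by simp), sum_image (by simp)]
        simp
    _ ≤ 4 / K := by linarith [show 4 / K = 2 / K + 2 / K by ring]

/-- Cauchy–Schwarz bound for the high-frequency part of a sequence in a weighted `ℓ²` space. -/
lemma sum_norm_le_of_freq_gt {s : ℕ} (hs : 1 ≤ s) {c : ℤ → ℂ}
    (hc : Summable fun k : ℤ => (1 + (k : ℝ) ^ 2) ^ s * ‖c k‖ ^ 2)
    {K : ℝ} (hK : 0 < K) (F : Finset ℤ) (hF : ∀ m ∈ F, K < |(m : ℝ)|) :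
    ∑ m ∈ F, ‖c m‖ ≤ 2 * K⁻¹ ^ ((s : ℝ) - 1 / 2) *
      Real.sqrt (∑' k : ℤ, (1 + (k : ℝ) ^ 2) ^ s * ‖c k‖ ^ 2) := by
  have hm0 : ∀ m ∈ F, 0 < |(m : ℝ)| := fun m hm => hK.trans (hF m hm)
  have h1 : ∑ m ∈ F, ‖c m‖ = ∑ m ∈ F, (|(m : ℝ)| ^ s)⁻¹ * (|(m : ℝ)| ^ s * ‖c m‖) :=
    sum_congr rfl fun m hm => by
      rw [inv_mul_cancel_left₀ (pow_pos (hm0 m hm) s).ne']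
  rw [h1]
  refine (Real.sum_mul_le_sqrt_mul_sqrt F _ _).trans ?_
  gcongr
  · refine Real.sqrt_le_iff.2 ⟨by positivity, ?_⟩
    obtain ⟨t, rfl⟩ : ∃ t, s = t + 1 := ⟨s - 1, by omega⟩
    have h2 : (2 * K⁻¹ ^ (((t + 1 : ℕ) : ℝ) - 1 / 2)) ^ 2 = (K⁻¹ ^ 2) ^ t * (4 / K) := by
      rw [mul_pow, ← Real.rpow_natCast (K⁻¹ ^ _), ← Real.rpow_mul (by positivity),
        show (((t + 1 : ℕ) : ℝ) - 1 / 2) * (2 : ℕ) = ((2 * t + 1 : ℕ) : ℝ) by push_cast; ring,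
        Real.rpow_natCast]
      ring
    rw [h2]
    refine le_trans ?_ (mul_le_mul_of_nonneg_left (sum_int_inv_sq_le F hK hF) (by positivity))
    rw [mul_sum]
    refine sum_le_sum fun m hm => ?_
    have h3 : |(m : ℝ)|⁻¹ ≤ K⁻¹ := inv_anti₀ hK (hF m hm).le
    calc ((|(m : ℝ)| ^ (t + 1))⁻¹) ^ 2 = (|(m : ℝ)|⁻¹ ^ 2) ^ t * (|(m : ℝ)| ^ 2)⁻¹ := by
          rw [← inv_pow]; ring
      _ ≤ (K⁻¹ ^ 2) ^ t * ((m : ℝ) ^ 2)⁻¹ := by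
          rw [sq_abs]; gcongr
  · refine le_trans (sum_le_sum fun m _ => ?_)
      (hc.sum_le_tsum F fun _ _ => by positivity)
    rw [mul_pow, ← pow_mul, mul_comm s 2, pow_mul, sq_abs]
    gcongr
    linarith

lemma summable_of_summable_sobolev {s : ℕ} (hs : 1 ≤ s) {c : ℤ → ℂ}
    (hc : Summable fun k : ℤ => (1 + (k : ℝ) ^ 2) ^ s * ‖c k‖ ^ 2) : Summable c := by
  have h2 : Summable fun k : ℤ => 1 / (k : ℝ) ^ 2 :=
    Real.summable_one_div_int_pow.2 one_lt_two
  refine Summable.of_norm_bounded_eventually (g := fun k : ℤ =>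
    1 / (k : ℝ) ^ 2 + (1 + (k : ℝ) ^ 2) ^ s * ‖c k‖ ^ 2) (h2.add hc) ?_
  filter_upwards [(Set.finite_singleton (0 : ℤ)).compl_mem_cofinite] with k hk
  have hk : (k : ℝ) ≠ 0 := by simpa using hk
  have h3 : (k : ℝ) ^ 2 ≤ (1 + (k : ℝ) ^ 2) ^ s :=
    (by linarith : (k : ℝ) ^ 2 ≤ 1 + (k : ℝ) ^ 2).trans
      (le_self_pow₀ (by linarith [sq_nonneg (k : ℝ)]) (by omega))
  have h4 : 2 * ‖c k‖ ≤ 1 / (k : ℝ) ^ 2 + (k : ℝ) ^ 2 * ‖c k‖ ^ 2 := by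
    have := sq_nonneg (1 / |(k : ℝ)| - |(k : ℝ)| * ‖c k‖)
    have h5 : 1 / |(k : ℝ)| * |(k : ℝ)| = 1 := by field_simp
    rw [sub_sq, div_pow, mul_pow, sq_abs] at this
    linear_combination this - 2 * ‖c k‖ * h5
  linarith [mul_le_mul_of_nonneg_right h3 (sq_nonneg ‖c k‖), norm_nonneg (c k)]

section Grid

lemma hgrid_pos {N : ℤ} (hN : 0 < N) : 0 < hgrid N := by
  have : (0 : ℝ) < N := by exact_mod_cast hN
  unfold hgrid
  positivity

lemma exp_gridPt_sum {N : ℤ} (hN : 0 < N) (he : Even N) (d : ℤ) :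
    ∑ j ∈ idxs N, Complex.exp (Complex.I * d * gridPt N j) = if N ∣ d then (N : ℂ) else 0 := by
  obtain ⟨M, rfl⟩ := he
  have hN' : ((M + M : ℤ) : ℂ) ≠ 0 := by exact_mod_cast hN.ne'
  set z : ℂ := Complex.exp (Complex.I * d * hgrid (M + M)) with hz
  have hz0 : z ≠ 0 := Complex.exp_ne_zero _
  have hterm (j : ℤ) : Complex.exp (Complex.I * d * gridPt (M + M) j) = z ^ j := by
    rw [hz, ← Complex.exp_int_mul, gridPt]
    congr 1
    push_cast
    ring
  have hone : z = 1 ↔ (M + M) ∣ d := by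
    rw [hz, Complex.exp_eq_one_iff]
    have hpi : (2 * Real.pi * Complex.I : ℂ) ≠ 0 := Complex.two_pi_I_ne_zero
    have key : Complex.I * d * (hgrid (M + M) : ℂ) =
        (d / (M + M : ℤ)) * (2 * Real.pi * Complex.I) := by
      simp only [hgrid]
      push_cast
      ring
    constructor
    · rintro ⟨n, hn⟩
      rw [key] at hn
      have := mul_right_cancel₀ hpi hn
      rw [div_eq_iff hN'] at this
      exact ⟨n, by rw [mul_comm]; exact_mod_cast this⟩
    · rintro ⟨n, rfl⟩
      refine ⟨n, ?_⟩
      rw [key, Int.cast_mul, mul_div_cancel_left₀ _ hN']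
  have hcard : (idxs (M + M)).card = (M + M).toNat := by
    rw [idxs, Int.card_Icc]
    congr 1
    omega
  simp_rw [hterm]
  split_ifs with h
  · rw [hone.2 h]
    simp only [one_zpow, sum_const, hcard, nsmul_eq_mul, mul_one]
    exact_mod_cast Int.toNat_of_nonneg hN.le
  · have hzN : z ^ (M + M) = 1 := by
      rw [← hterm, Complex.exp_eq_one_iff]
      refine ⟨d, ?_⟩
      rw [gridPt, hgrid, mul_div_cancel₀ _ (by exact_mod_cast hN.ne')]
      push_cast
      ring
    have hshift : ∑ j ∈ idxs (M + M), z ^ (j + 1) = ∑ j ∈ idxs (M + M), z ^ j := by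
      refine sum_nbij' (fun j => if j = M then -M + 1 else j + 1)
        (fun j => if j = -M + 1 then M else j - 1) ?_ ?_ ?_ ?_ ?_
      · intro j hj
        simp only [idxs, Finset.mem_Icc] at hj ⊢
        split_ifs <;> omega
      · intro j hj
        simp only [idxs, Finset.mem_Icc] at hj ⊢
        split_ifs <;> omega
      · intro j hj
        simp only [idxs, Finset.mem_Icc] at hj
        split_ifs <;> omega
      · intro j hj
        simp only [idxs, Finset.mem_Icc] at hj
        split_ifs <;> omega
      · intro j _
        split_ifs with hj
        · rw [hj, show M + 1 = (-M + 1) + (M + M) by ring, zpow_add₀ hz0, hzN, mul_one]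
        · rfl
    have : (z - 1) * ∑ j ∈ idxs (M + M), z ^ j = 0 := by
      rw [sub_mul, one_mul, mul_sum, sub_eq_zero, ← hshift]
      exact sum_congr rfl fun j _ => by rw [zpow_add₀ hz0, zpow_one, mul_comm]
    exact (mul_eq_zero.1 this).resolve_left (sub_ne_zero.2 fun h' => h (hone.1 h'))

lemma dft_exp {N : ℤ} (hN : 0 < N) (he : Even N) (c : ℂ) (m k : ℤ) :
    dft N (fun j => c * Complex.exp (Complex.I * m * gridPt N j)) k =
      if N ∣ m - k then c else 0 := by
  have hN' : (N : ℂ) ≠ 0 := by exact_mod_cast hN.ne'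
  have h : ∀ j, c * Complex.exp (Complex.I * m * gridPt N j) *
      Complex.exp (-(Complex.I * k * gridPt N j)) =
      c * Complex.exp (Complex.I * (m - k : ℤ) * gridPt N j) := fun j => by
    rw [mul_assoc, ← Complex.exp_add]
    congr 2
    push_cast
    ring
  simp_rw [dft, h]
  rw [← mul_sum, exp_gridPt_sum hN he]
  split_ifs
  · field_simp
  · simp

lemma exp_gridPt_congr {N : ℤ} (hN : 0 < N) {m k : ℤ} (h : N ∣ m - k) (j : ℤ) :
    Complex.exp (Complex.I * k * gridPt N j) = Complex.exp (Complex.I * m * gridPt N j) := by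
  have hN' : (N : ℂ) ≠ 0 := by exact_mod_cast hN.ne'
  obtain ⟨n, hn⟩ := h
  obtain rfl : m = k + N * n := by omega
  rw [Complex.exp_eq_exp_iff_exists_int]
  refine ⟨-(n * j), ?_⟩
  simp only [gridPt, hgrid]
  push_cast
  field_simp
  ring

lemma eq_of_mem_idxs {N : ℤ} (he : Even N) {k l : ℤ} (hk : k ∈ idxs N)
    (hl : l ∈ idxs N) (h : N ∣ k - l) : k = l := by
  obtain ⟨M, rfl⟩ := he
  simp only [idxs, Finset.mem_Icc] at hk hl
  have := Int.eq_zero_of_abs_lt_dvd h (by rw [abs_lt]; omega)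
  omega

lemma exists_mem_idxs {N : ℤ} (hN : 0 < N) (he : Even N) (m : ℤ) :
    ∃ k ∈ idxs N, N ∣ m - k := by
  obtain ⟨M, rfl⟩ := he
  refine ⟨(m + M - 1) % (M + M) - M + 1, ?_, ?_⟩
  · have h1 := Int.emod_nonneg (m + M - 1) hN.ne'
    have h2 := Int.emod_lt_of_pos (m + M - 1) hN
    simp only [idxs, Finset.mem_Icc]
    omega
  · have h := Int.dvd_self_sub_emod (x := m + M - 1) (m := M + M)
    convert h using 1
    ring

/-- Filtering a pure mode multiplies it by the filter value at its aliased frequency. -/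
lemma filterP_exp {N : ℤ} (hN : 0 < N) (he : Even N) (ρ : ℝ → ℝ) (c : ℂ) {m k : ℤ}
    (hk : k ∈ idxs N) (hmk : N ∣ m - k) (i : ℤ) :
    filterP N ρ (fun j => c * Complex.exp (Complex.I * m * gridPt N j)) i =
      ρ (gridPt N k) * (c * Complex.exp (Complex.I * m * gridPt N i)) := by
  rw [filterP, idft, sum_eq_single_of_mem k hk]
  · rw [dft_exp hN he, if_pos hmk, exp_gridPt_congr hN hmk, mul_assoc]
  · intro l hl hlk
    rw [dft_exp hN he, if_neg, mul_zero, zero_mul]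
    intro hml
    refine hlk (eq_of_mem_idxs he hl hk ?_)
    have := dvd_sub hmk hml
    rwa [sub_sub_sub_cancel_left] at this

lemma hasSum_filterP {ι : Type*} (N : ℤ) (ρ : ℝ → ℝ) {u : ι → ℤ → ℂ} {f : ℤ → ℂ}
    (h : ∀ j, HasSum (fun m => u m j) (f j)) (i : ℤ) :
    HasSum (fun m => filterP N ρ (u m) i) (filterP N ρ f i) := by
  simp only [filterP, idft, dft]
  exact hasSum_sum fun k _ => (((hasSum_sum fun j _ => (h j).mul_right _).mul_left _).mul_left
    _).mul_right _

lemma abs_gridPt_le {N : ℤ} (hN : 0 < N) {k : ℤ} (hk : k ∈ idxs N) :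
    |gridPt N k| ≤ Real.pi := by
  have hN' : (0 : ℝ) < N := by exact_mod_cast hN
  have h2 : 2 * |(k : ℝ)| ≤ N := by
    simp only [idxs, Finset.mem_Icc] at hk
    have : 2 * |k| ≤ N := by
      rcases abs_cases k with h | h <;> omega
    exact_mod_cast this
  rw [gridPt, abs_mul, abs_of_pos (hgrid_pos hN), hgrid, ← mul_div_assoc, div_le_iff₀ hN']
  nlinarith [Real.pi_pos]

end Grid

/-- Lemma 5.4: spectral accuracy of the numerical filtering operator. -/
theorem filtering_accuracy (s : ℕ) (hs : 1 ≤ s) (ρ : ℝ → ℝ) (hρ : IsFilter ρ) :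
    ∃ c : ℝ, 0 < c ∧ ∀ f : ℝ → ℂ, Function.Periodic f (2 * Real.pi) →
      ContDiff ℝ (s : ℕ) f →
      ∀ N : ℤ, 2 ≤ N → Even N → ∀ i ∈ idxs N,
        ‖filterP N ρ (samples N f) i - f (gridPt N i)‖ ≤
          c * hgrid N ^ ((s : ℝ) - 1 / 2) * sobolevNorm s f := by
  obtain ⟨μ, hμ0, hμ1, hμ⟩ := hρ.one_near_zero
  obtain ⟨r, -, hr⟩ := hρ.smooth
  obtain ⟨B, hB⟩ := (isCompact_Icc (a := -Real.pi) (b := Real.pi)).exists_bound_of_continuousOn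
    (f := ρ) hr.continuous.continuousOn
  have hB0 : 0 ≤ B := (norm_nonneg _).trans (hB 0 ⟨by linarith [Real.pi_pos], Real.pi_pos.le⟩)
  have hμπ : 0 < μ * Real.pi := mul_pos hμ0 Real.pi_pos
  refine ⟨(B + 1) * (2 * (μ * Real.pi)⁻¹ ^ ((s : ℝ) - 1 / 2)), by positivity, ?_⟩
  intro f hper hf N hN2 heven i _
  have hN : 0 < N := by omega
  have hh := hgrid_pos hN
  have hsob := summable_sobolev hper s hf
  have hseries := hasSum_fourierCoeffP hper hf.continuous (summable_of_summable_sobolev hs hsob)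
  choose k hk hmk using exists_mem_idxs hN heven
  have hsum := (hasSum_filterP N ρ (f := samples N f) (fun j => hseries (gridPt N j)) i).sub
    (hseries (gridPt N i))
  simp only [filterP_exp hN heven ρ _ (hk _) (hmk _)] at hsum
  set K : ℝ := μ * Real.pi / hgrid N with hK
  have hKpos : 0 < K := div_pos hμπ hh
  have hlow (m : ℤ) (hm : |(m : ℝ)| ≤ K) : ρ (gridPt N (k m)) = 1 := by
    have h1 : |gridPt N m| ≤ μ * Real.pi := by
      rw [gridPt, abs_mul, abs_of_pos hh]
      exact (le_div_iff₀ hh).1 hm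
    have h2 : m ∈ idxs N := by
      have h3 : 2 * |(m : ℝ)| < N := by
        have hN' : (0 : ℝ) < N := by exact_mod_cast hN
        have : K = μ * N / 2 := by
          rw [hK, hgrid]
          field_simp
        nlinarith
      have h4 : 2 * |m| < N := by exact_mod_cast h3
      obtain ⟨M, rfl⟩ := heven
      have := abs_lt.1 (by omega : |m| < M)
      simp only [idxs, Finset.mem_Icc]
      omega
    rw [← eq_of_mem_idxs heven h2 (hk m) (hmk m)]
    exact hμ _ h1
  refine le_of_tendsto' hsum.norm fun F => ?_
  have hterm (m : ℤ) : ‖(ρ (gridPt N (k m)) : ℂ) * (fourierCoeffP f m *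
      Complex.exp (Complex.I * m * gridPt N i)) - fourierCoeffP f m *
      Complex.exp (Complex.I * m * gridPt N i)‖ ≤
      if K < |(m : ℝ)| then (B + 1) * ‖fourierCoeffP f m‖ else 0 := by
    split_ifs with h
    · have he : ‖Complex.exp (Complex.I * m * gridPt N i)‖ = 1 := by
        rw [mul_assoc, mul_comm]
        exact_mod_cast Complex.norm_exp_ofReal_mul_I (m * gridPt N i)
      rw [← sub_one_mul, norm_mul, norm_mul, he, mul_one]
      gcongr
      refine (norm_sub_le _ _).trans ?_
      rw [norm_one, Complex.norm_real]
      gcongr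
      exact hB _ (abs_le.1 (abs_gridPt_le hN (hk m)))
    · rw [hlow m (not_lt.1 h)]
      simp
  refine (norm_sum_le_of_le F fun m _ => hterm m).trans ?_
  rw [← sum_filter, ← mul_sum]
  have hbound := sum_norm_le_of_freq_gt hs hsob hKpos (F.filter fun m : ℤ => K < |(m : ℝ)|)
    fun m hm => (mem_filter.1 hm).2
  have hKinv : K⁻¹ ^ ((s : ℝ) - 1 / 2) =
      (μ * Real.pi)⁻¹ ^ ((s : ℝ) - 1 / 2) * hgrid N ^ ((s : ℝ) - 1 / 2) := by
    rw [← Real.mul_rpow (by positivity) hh.le, hK, inv_div, div_eq_inv_mul]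
  refine (mul_le_mul_of_nonneg_left hbound (by positivity)).trans_eq ?_
  rw [hKinv, sobolevNorm]
  ring

end
end

section
/- Let N ≥ 2 be an even integer and let f be a discrete function with f̂_0 = f̂_{N/2} = 0, extended N-periodically in its index. Then H_h(S_h f) = S_h(H_h f), and for each grid index i, (H_h(S_h f))_i = (2h/π) Σ_{j∈ℤ, (j−i) odd} (f_i − f_j)/(α_i − α_j)², where α_j = jh for all j ∈ ℤ and the series over all integers j with j − i odd converges absolutely. -/
open scoped BigOperators
open Finset

noncomputable section

/-- The discrete Fourier mode `j ↦ e^{ikα_j}`. -/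
def gridMode (N k j : ℤ) : ℂ := Complex.exp (Complex.I * (k : ℂ) * (gridPt N j : ℂ))

lemma gridMode_eq (N k j : ℤ) :
    gridMode N k j = Complex.exp (2 * Real.pi * Complex.I * ((k * j : ℤ) : ℂ) / N) := by
  unfold gridMode gridPt hgrid
  congr 1
  push_cast
  ring

lemma gridMode_comm (N k j : ℤ) : gridMode N k j = gridMode N j k := by
  rw [gridMode_eq, gridMode_eq, mul_comm k j]

lemma gridMode_add_right (N k i j : ℤ) :
    gridMode N k (i + j) = gridMode N k i * gridMode N k j := by
  rw [gridMode_eq, gridMode_eq, gridMode_eq, ← Complex.exp_add]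
  congr 1
  push_cast
  ring

lemma gridMode_add_left (N k l j : ℤ) :
    gridMode N (k + l) j = gridMode N k j * gridMode N l j := by
  rw [gridMode_comm, gridMode_add_right, gridMode_comm N j, gridMode_comm N j]

lemma gridMode_neg_neg (N k j : ℤ) : gridMode N (-k) (-j) = gridMode N k j := by
  rw [gridMode_eq, gridMode_eq, neg_mul_neg]

lemma gridMode_neg_left (N k j : ℤ) : gridMode N (-k) j = gridMode N k (-j) := by
  rw [gridMode_eq, gridMode_eq, neg_mul, mul_neg]

lemma exp_neg_eq_gridMode (N k j : ℤ) :
    Complex.exp (-(Complex.I * (k : ℂ) * (gridPt N j : ℂ))) = gridMode N (-k) j := by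
  unfold gridMode
  congr 1
  push_cast
  ring

lemma gridMode_eq_one_iff {N : ℤ} (hN : N ≠ 0) (k j : ℤ) :
    gridMode N k j = 1 ↔ N ∣ k * j := by
  have hNC : (N : ℂ) ≠ 0 := by exact_mod_cast hN
  have hpi : (2 * Real.pi * Complex.I : ℂ) ≠ 0 := Complex.two_pi_I_ne_zero
  rw [gridMode_eq, Complex.exp_eq_one_iff]
  refine exists_congr fun n => ?_
  rw [div_eq_iff hNC, mul_comm (n : ℂ), mul_assoc (2 * Real.pi * Complex.I : ℂ),
    mul_right_inj' hpi, mul_comm (n : ℂ)]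
  exact_mod_cast Iff.rfl

lemma gridMode_add_period {N : ℤ} (hN : N ≠ 0) (k j : ℤ) :
    gridMode N k (j + N) = gridMode N k j := by
  rw [gridMode_add_right, (gridMode_eq_one_iff hN k N).2 (dvd_mul_left _ _), mul_one]

lemma gridPt_sub (N i j : ℤ) : gridPt N i - gridPt N j = gridPt N (i - j) := by
  unfold gridPt
  push_cast
  ring

lemma sum_idxs_add_one {N : ℤ} (hN : 0 < N) (hNe : Even N) (g : ℤ → ℂ)
    (hg : ∀ j, g (j + N) = g j) :
    ∑ j ∈ idxs N, g (j + 1) = ∑ j ∈ idxs N, g j := by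
  obtain ⟨M, rfl⟩ := hNe
  have hhalf : (M + M) / 2 = M := by omega
  have hleft : idxs (M + M) = insert (-M + 1) (Finset.Icc (-M + 2) M) := by
    ext x
    simp only [idxs, hhalf, Finset.mem_Icc, Finset.mem_insert]
    omega
  have hright : (idxs (M + M)).image (· + 1) = insert (M + 1) (Finset.Icc (-M + 2) M) := by
    ext x
    simp only [idxs, hhalf, Finset.mem_Icc, Finset.mem_insert, Finset.mem_image]
    constructor
    · rintro ⟨y, hy, rfl⟩
      omega
    · intro h
      exact ⟨x - 1, by omega, by omega⟩
  rw [← Finset.sum_image (f := g) (g := (· + 1)) (fun x _ y _ h => by simpa using h), hright,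
    hleft, Finset.sum_insert (by simp), Finset.sum_insert (by simp), ← hg (-M + 1)]
  congr 2
  ring

lemma sum_idxs_add {N : ℤ} (hN : 0 < N) (hNe : Even N) (g : ℤ → ℂ)
    (hg : ∀ j, g (j + N) = g j) (a : ℤ) :
    ∑ j ∈ idxs N, g (j + a) = ∑ j ∈ idxs N, g j := by
  have step (a : ℤ) : ∑ j ∈ idxs N, g (j + (a + 1)) = ∑ j ∈ idxs N, g (j + a) := by
    rw [← sum_idxs_add_one hN hNe (fun j => g (j + a))
      (fun j => by rw [add_right_comm, hg])]
    exact Finset.sum_congr rfl fun j _ => by ring_nf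
  induction a using Int.induction_on with
  | zero => simp
  | succ n ih => rw [step, ih]
  | pred n ih => rw [← ih, ← step, sub_add_cancel]

lemma sum_idxs_neg {N : ℤ} (hN : 0 < N) (hNe : Even N) (g : ℤ → ℂ)
    (hg : ∀ j, g (j + N) = g j) :
    ∑ j ∈ idxs N, g (-j) = ∑ j ∈ idxs N, g j := by
  rw [← sum_idxs_add hN hNe g hg (-1)]
  refine Finset.sum_nbij' (fun j => -j + 1) (fun j => -j + 1) ?_ ?_ ?_ ?_ ?_
  · intro j hj
    simp only [idxs, Finset.mem_Icc] at hj ⊢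
    omega
  · intro j hj
    simp only [idxs, Finset.mem_Icc] at hj ⊢
    omega
  · intro j _
    ring
  · intro j _
    ring
  · intro j _
    ring_nf

lemma dvd_sub_iff_of_mem_idxs {N k l : ℤ}
    (hk : k ∈ idxs N) (hl : l ∈ idxs N) : N ∣ k - l ↔ k = l := by
  simp only [idxs, Finset.mem_Icc] at hk hl
  refine ⟨fun h => ?_, fun h => by simp [h]⟩
  have := Int.eq_zero_of_abs_lt_dvd h (by rw [abs_lt]; constructor <;> omega)
  omega

lemma card_idxs {N : ℤ} (hN : 0 < N) (hNe : Even N) : ((idxs N).card : ℂ) = N := by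
  have h : ((idxs N).card : ℤ) = N := by
    obtain ⟨M, rfl⟩ := hNe
    rw [idxs, Int.card_Icc]
    omega
  exact_mod_cast h

lemma sum_gridMode {N : ℤ} (hN : 0 < N) (hNe : Even N) (k : ℤ) :
    ∑ j ∈ idxs N, gridMode N k j = if N ∣ k then (N : ℂ) else 0 := by
  split_ifs with hk
  · rw [Finset.sum_congr rfl fun j _ =>
      (gridMode_eq_one_iff hN.ne' k j).2 (hk.mul_right j)]
    simp [card_idxs hN hNe]
  · have h := sum_idxs_add_one hN hNe (gridMode N k) (gridMode_add_period hN.ne' k)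
    simp only [gridMode_add_right, ← Finset.sum_mul] at h
    have hne : gridMode N k 1 ≠ 1 := by
      rwa [ne_eq, gridMode_eq_one_iff hN.ne', mul_one]
    by_contra hs
    exact hne (mul_left_cancel₀ hs (by rw [h, mul_one]))

lemma idft_eq (N : ℤ) (c : ℤ → ℂ) (j : ℤ) :
    idft N c j = ∑ k ∈ idxs N, c k * gridMode N k j := rfl

lemma dft_eq (N : ℤ) (f : ℤ → ℂ) (k : ℤ) :
    dft N f k = (N : ℂ)⁻¹ * ∑ j ∈ idxs N, f j * gridMode N (-k) j := by
  simp only [dft, exp_neg_eq_gridMode]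

lemma dft_idft {N : ℤ} (hN : 0 < N) (hNe : Even N) (c : ℤ → ℂ) {k : ℤ} (hk : k ∈ idxs N) :
    dft N (idft N c) k = c k := by
  have hNC : (N : ℂ) ≠ 0 := by exact_mod_cast hN.ne'
  simp only [dft_eq, idft_eq, Finset.sum_mul]
  rw [Finset.sum_comm]
  simp only [mul_assoc, ← gridMode_add_left, ← Finset.mul_sum, sum_gridMode hN hNe,
    ← sub_eq_add_neg]
  rw [Finset.sum_eq_single_of_mem k hk]
  · simp [mul_comm (c k), inv_mul_cancel_left₀ hNC]
  · intro l hl hlk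
    rw [if_neg (by rwa [dvd_sub_iff_of_mem_idxs hl hk]), mul_zero]

lemma idft_dft {N : ℤ} (hN : 0 < N) (hNe : Even N) (f : ℤ → ℂ)
    (hper : ∀ j, f (j + N) = f j) : idft N (dft N f) = f := by
  have hNC : (N : ℂ) ≠ 0 := by exact_mod_cast hN.ne'
  have h0 : (0 : ℤ) ∈ idxs N := by
    simp only [idxs, Finset.mem_Icc]
    obtain ⟨M, rfl⟩ := hNe
    omega
  funext j
  simp only [dft_eq, idft_eq, mul_assoc, Finset.sum_mul, ← Finset.mul_sum]
  rw [Finset.sum_comm]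
  have hinner (l : ℤ) : ∑ k ∈ idxs N, f l * (gridMode N (-k) l * gridMode N k j)
      = f l * if N ∣ j - l then (N : ℂ) else 0 := by
    rw [← sum_gridMode hN hNe, Finset.mul_sum]
    refine Finset.sum_congr rfl fun k _ => ?_
    rw [gridMode_neg_left, ← gridMode_add_right, gridMode_comm, neg_add_eq_sub]
  simp only [hinner]
  rw [← sum_idxs_add hN hNe (fun l => f l * if N ∣ j - l then (N : ℂ) else 0) _ j,
    Finset.sum_eq_single_of_mem 0 h0]
  · simp [mul_comm (f j), inv_mul_cancel_left₀ hNC]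
  · intro l hl hl0
    have : ¬ N ∣ j - (l + j) := by
      rw [show j - (l + j) = 0 - l by ring, dvd_sub_iff_of_mem_idxs h0 hl]
      exact hl0.symm
    rw [if_neg this, mul_zero]
  · intro l
    simp only [hper, ← sub_sub, dvd_sub_self_right]

lemma Sh_idft {N : ℤ} (hN : 0 < N) (hNe : Even N) (c : ℤ → ℂ) :
    Sh N (idft N c) = idft N fun k => if k = N / 2 then 0 else Complex.I * (k : ℂ) * c k := by
  funext j
  simp only [Sh, idft_eq]
  exact Finset.sum_congr rfl fun k hk => by rw [dft_idft hN hNe c hk]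

lemma cot_gridPt_half_add_period {N : ℤ} (hN : N ≠ 0) (j : ℤ) :
    Real.cot (gridPt N (j + N) / 2) = Real.cot (gridPt N j / 2) := by
  have hNR : (N : ℝ) ≠ 0 := by exact_mod_cast hN
  have h : gridPt N (j + N) / 2 = gridPt N j / 2 + Real.pi := by
    unfold gridPt hgrid
    push_cast
    field_simp
  rw [h, Real.cot_eq_cos_div_sin, Real.cot_eq_cos_div_sin, Real.cos_add_pi, Real.sin_add_pi,
    neg_div_neg_eq]

lemma odd_add_even_iff {N : ℤ} (hNe : Even N) (j : ℤ) : Odd (j + N) ↔ Odd j := by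
  simp [Int.odd_add, hNe]

lemma Hh_eq (N : ℤ) (f : ℤ → ℂ) (i : ℤ) :
    Hh N f i = ((hgrid N / Real.pi : ℝ) : ℂ) *
      ∑ j ∈ idxs N, if Odd (j - i) then f j * (Real.cot (gridPt N (i - j) / 2) : ℂ) else 0 := by
  simp only [Hh, gridPt_sub, Finset.sum_filter]

/-- Fourier modes are eigenfunctions of the discrete Hilbert transform. -/
lemma Hh_gridMode {N : ℤ} (hN : 0 < N) (hNe : Even N) (k i : ℤ) :
    Hh N (gridMode N k) i = Hh N (gridMode N k) 0 * gridMode N k i := by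
  rw [Hh_eq, Hh_eq, mul_assoc, Finset.sum_mul]
  congr 1
  rw [← sum_idxs_add hN hNe _ _ i]
  · refine Finset.sum_congr rfl fun j _ => ?_
    simp only [add_sub_cancel_right, sub_zero, zero_sub, sub_add_cancel_right, ite_mul, zero_mul,
      gridMode_add_right]
    congr 1
    ring
  · intro j
    rw [add_sub_right_comm, gridMode_add_period hN.ne',
      ← cot_gridPt_half_add_period hN.ne' (i - (j + N))]
    simp only [odd_add_even_iff hNe, sub_add_eq_sub_sub, sub_add_cancel]

lemma Hh_idft {N : ℤ} (hN : 0 < N) (hNe : Even N) (c : ℤ → ℂ) :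
    Hh N (idft N c) = idft N fun k => Hh N (gridMode N k) 0 * c k := by
  funext i
  simp only [idft_eq]
  calc Hh N (idft N c) i = ∑ k ∈ idxs N, c k * Hh N (gridMode N k) i := by
        simp only [Hh, idft_eq, Finset.mul_sum, Finset.sum_mul]
        rw [Finset.sum_comm]
        refine Finset.sum_congr rfl fun k _ => Finset.sum_congr rfl fun j _ => ?_
        ring
    _ = _ := by
        refine Finset.sum_congr rfl fun k _ => ?_
        rw [Hh_gridMode hN hNe]
        ring

lemma sum_odd_gridMode {N : ℤ} (hN : 0 < N) (hNe : Even N) (k : ℤ) :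
    ∑ j ∈ idxs N, (if Odd j then gridMode N k j else 0)
      = ((if N ∣ k then (N : ℂ) else 0) - if N ∣ k + N / 2 then (N : ℂ) else 0) / 2 := by
  rw [← sum_gridMode hN hNe, ← sum_gridMode hN hNe, ← Finset.sum_sub_distrib, Finset.sum_div]
  refine Finset.sum_congr rfl fun j _ => ?_
  have hmode : gridMode N (N / 2) j = if Odd j then -1 else 1 := by
    have hNC : (N : ℂ) ≠ 0 := by exact_mod_cast hN.ne'
    obtain ⟨M, rfl⟩ := hNe
    have hhalf : (M + M) / 2 = M := by omega
    have hMC : (M : ℂ) ≠ 0 := by exact_mod_cast (by omega : M ≠ 0)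
    rw [hhalf, gridMode_eq]
    have harg : 2 * Real.pi * Complex.I * ((M * j : ℤ) : ℂ) / ((M + M : ℤ) : ℂ)
        = (j : ℂ) * (Real.pi * Complex.I) := by
      push_cast at hNC ⊢
      rw [div_eq_iff hNC]
      ring
    rw [harg, Complex.exp_int_mul, Complex.exp_pi_mul_I]
    split_ifs with hj
    · exact hj.neg_one_zpow
    · exact (Int.not_odd_iff_even.1 hj).neg_one_zpow
  rw [gridMode_add_left, hmode]
  split_ifs <;> ring

lemma gridMode_sub_one_mul_cot {N : ℤ} {j : ℤ} (h : gridMode N 1 j ≠ 1) :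
    (gridMode N 1 j - 1) * (Real.cot (gridPt N (-j) / 2) : ℂ)
      = -Complex.I * (gridMode N 1 j + 1) := by
  have harg : 2 * Complex.I * ((gridPt N (-j) / 2 : ℝ) : ℂ)
      = -(Complex.I * ((1 : ℤ) : ℂ) * (gridPt N j : ℂ)) := by
    unfold gridPt
    push_cast
    ring
  rw [Complex.ofReal_cot, Complex.cot_eq_exp_ratio, harg, Complex.exp_neg]
  change (gridMode N 1 j - 1) * (((gridMode N 1 j)⁻¹ + 1) / (Complex.I * (1 - (gridMode N 1 j)⁻¹)))
    = _
  have hz : gridMode N 1 j ≠ 0 := Complex.exp_ne_zero _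
  have hz1 : gridMode N 1 j - 1 ≠ 0 := sub_ne_zero.2 h
  generalize gridMode N 1 j = z at *
  have h2 : 1 - z⁻¹ = (z - 1) / z := by field_simp
  rw [h2]
  field_simp
  rw [Complex.I_sq]
  ring

lemma hgrid_div_pi (N : ℤ) : ((hgrid N / Real.pi : ℝ) : ℂ) = 2 / N := by
  have : hgrid N / Real.pi = 2 / N := by
    unfold hgrid
    field_simp
  rw [this]
  push_cast
  rfl

lemma Hh_gridMode_zero_succ {N : ℤ} (hN : 0 < N) (hNe : Even N) (k : ℤ) :
    Hh N (gridMode N (k + 1)) 0 - Hh N (gridMode N k) 0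
      = -Complex.I * (2 / N) *
        (∑ j ∈ idxs N, (if Odd j then gridMode N (k + 1) j else 0)
          + ∑ j ∈ idxs N, (if Odd j then gridMode N k j else 0)) := by
  rw [Hh_eq, Hh_eq, ← mul_sub, hgrid_div_pi, mul_comm (-Complex.I), mul_assoc]
  congr 1
  rw [← Finset.sum_sub_distrib, ← Finset.sum_add_distrib, Finset.mul_sum]
  refine Finset.sum_congr rfl fun j _ => ?_
  rw [sub_zero, zero_sub]
  split_ifs with hj
  · have hne : gridMode N 1 j ≠ 1 := by
      rw [ne_eq, gridMode_eq_one_iff hN.ne', one_mul]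
      intro hdvd
      exact Int.not_even_iff_odd.2 hj (hNe.trans_dvd hdvd)
    rw [gridMode_add_left]
    linear_combination gridMode N k j * gridMode_sub_one_mul_cot hne
  · simp

lemma Hh_gridMode_neg_zero {N : ℤ} (hN : 0 < N) (hNe : Even N) (k : ℤ) :
    Hh N (gridMode N (-k)) 0 = -Hh N (gridMode N k) 0 := by
  rw [Hh_eq, Hh_eq, ← mul_neg, ← Finset.sum_neg_distrib]
  congr 1
  rw [← sum_idxs_neg hN hNe]
  · refine Finset.sum_congr rfl fun j _ => ?_
    have hcot : Real.cot (gridPt N j / 2) = -Real.cot (gridPt N (-j) / 2) := by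
      have : gridPt N (-j) / 2 = -(gridPt N j / 2) := by
        unfold gridPt
        push_cast
        ring
      rw [this, Real.cot_eq_cos_div_sin, Real.cot_eq_cos_div_sin, Real.cos_neg, Real.sin_neg,
        div_neg, neg_neg]
    simp only [sub_zero, zero_sub, neg_neg, odd_neg, gridMode_neg_neg, hcot]
    split_ifs <;> simp
  · intro j
    rw [gridMode_add_period hN.ne', ← cot_gridPt_half_add_period hN.ne' (0 - (j + N))]
    simp only [sub_zero, odd_add_even_iff hNe, sub_add_eq_sub_sub, sub_add_cancel]

lemma Hh_gridMode_zero_of_pos {N : ℤ} (hN : 0 < N) (hNe : Even N) (n : ℕ)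
    (hn : ((n + 1 : ℕ) : ℤ) < N / 2) :
    Hh N (gridMode N ((n + 1 : ℕ) : ℤ)) 0 = -Complex.I := by
  have hNC : (N : ℂ) ≠ 0 := by exact_mod_cast hN.ne'
  have not_dvd {a : ℤ} (h1 : 0 < a) (h2 : a < N) : ¬ N ∣ a :=
    fun h => absurd (Int.le_of_dvd h1 h) (by omega)
  induction n with
  | zero =>
    have hstep := Hh_gridMode_zero_succ hN hNe 0
    have hzero : Hh N (gridMode N 0) 0 = 0 := by
      have h := Hh_gridMode_neg_zero hN hNe 0
      rw [neg_zero] at h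
      exact self_eq_neg.1 h
    rw [sum_odd_gridMode hN hNe, sum_odd_gridMode hN hNe, hzero, sub_zero, zero_add, zero_add,
      if_pos (dvd_zero N), if_neg (not_dvd (a := 1) (by omega) (by omega)),
      if_neg (not_dvd (a := 1 + N / 2) (by omega) (by omega)),
      if_neg (not_dvd (a := N / 2) (by omega) (by omega))] at hstep
    rw [zero_add, Nat.cast_one, hstep]
    field_simp
    ring
  | succ n ih =>
    have hstep := Hh_gridMode_zero_succ hN hNe ((n + 1 : ℕ) : ℤ)
    rw [sum_odd_gridMode hN hNe, sum_odd_gridMode hN hNe, ih (by omega),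
      if_neg (not_dvd (a := ((n + 1 : ℕ) : ℤ) + 1) (by omega) (by omega)),
      if_neg (not_dvd (a := ((n + 1 : ℕ) : ℤ) + 1 + N / 2) (by omega) (by omega)),
      if_neg (not_dvd (a := ((n + 1 : ℕ) : ℤ)) (by omega) (by omega)),
      if_neg (not_dvd (a := ((n + 1 : ℕ) : ℤ) + N / 2) (by omega) (by omega))] at hstep
    rw [Nat.cast_succ (n + 1)]
    linear_combination hstep

/-- The discrete Hilbert transform has symbol `-i sgn k`, so `H_h S_h` has symbol `|k|`. -/
lemma Hh_gridMode_zero_mul_I_mul {N : ℤ} (hN : 0 < N) (hNe : Even N) {k : ℤ}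
    (hk : k ∈ idxs N) (hk2 : k ≠ N / 2) :
    Hh N (gridMode N k) 0 * (Complex.I * k) = |k| := by
  simp only [idxs, Finset.mem_Icc] at hk
  have key (m : ℤ) (h0 : 0 < m) (h1 : m < N / 2) : Hh N (gridMode N m) 0 = -Complex.I := by
    obtain ⟨n, rfl⟩ := Int.eq_ofNat_of_zero_le h0.le
    obtain ⟨n, rfl⟩ := Nat.exists_eq_succ_of_ne_zero (n := n) (by omega)
    exact Hh_gridMode_zero_of_pos hN hNe n h1
  rcases lt_trichotomy k 0 with h | rfl | h
  · have := key (-k) (by omega) (by omega)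
    rw [Hh_gridMode_neg_zero hN hNe, neg_inj] at this
    rw [this, abs_of_neg h, ← mul_assoc, Complex.I_mul_I]
    push_cast
    ring
  · simp
  · rw [key k h (by omega), abs_of_pos h, ← mul_assoc, neg_mul, Complex.I_mul_I]
    ring

/-- The Fourier series of the second Bernoulli polynomial. -/
lemma hasSum_exp_div_sq {x : ℝ} (hx : x ∈ Set.Icc (0 : ℝ) 1) :
    HasSum (fun n : ℤ => Complex.exp (2 * Real.pi * Complex.I * n * x) / (n : ℂ) ^ 2)
      (2 * Real.pi ^ 2 * (x ^ 2 - x + 6⁻¹)) := by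
  have h := hasSum_one_div_pow_mul_fourier_mul_bernoulliFun le_rfl hx
  convert! h using 1
  · funext n
    rw [fourier_coe_apply]
    simp only [Complex.ofReal_one, div_one]
    ring
  · rw [bernoulliFun_two]
    push_cast
    rw [mul_pow, Complex.I_sq, Nat.factorial_two]
    push_cast
    ring

lemma hasSum_odd_exp_div_sq {x : ℝ} (hx : x ∈ Set.Icc (0 : ℝ) (1 / 2)) :
    HasSum (fun n : ℤ => if Odd n then
        Complex.exp (2 * Real.pi * Complex.I * n * x) / (n : ℂ) ^ 2 else 0)
      (Real.pi ^ 2 * (1 / 4 - x)) := by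
  obtain ⟨hx0, hx1⟩ := hx
  have hall := hasSum_exp_div_sq (x := x) ⟨hx0, by linarith⟩
  have hdouble := (hasSum_exp_div_sq (x := 2 * x) ⟨by linarith, by linarith⟩).mul_left (1 / 4)
  have heven : HasSum (fun n : ℤ => if Odd n then 0 else
      Complex.exp (2 * Real.pi * Complex.I * n * x) / (n : ℂ) ^ 2)
      (1 / 4 * (2 * Real.pi ^ 2 * (((2 * x : ℝ) : ℂ) ^ 2 - ((2 * x : ℝ) : ℂ) + 6⁻¹))) := by
    rw [← (mul_right_injective₀ (two_ne_zero' ℤ)).hasSum_iff]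
    · convert! hdouble using 1
      funext n
      simp only [Function.comp_apply]
      rw [if_neg (Int.not_odd_iff_even.2 (even_two_mul n))]
      push_cast
      rw [mul_pow, show 2 * Real.pi * Complex.I * (2 * (n : ℂ)) * x
        = 2 * Real.pi * Complex.I * n * (2 * x) by ring]
      ring
    · intro n hn
      refine if_pos (Int.not_even_iff_odd.1 fun ⟨m, hm⟩ => hn ⟨m, ?_⟩)
      rw [hm]
      ring
  convert! hall.sub heven using 1
  · funext n
    split_ifs <;> simp
  · push_cast
    ring

lemma hasSum_odd_one_sub_exp_div_sq {x : ℝ} (hx : |x| ≤ 1 / 2) :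
    HasSum (fun n : ℤ => if Odd n then
        (1 - Complex.exp (2 * Real.pi * Complex.I * n * x)) / (n : ℂ) ^ 2 else 0)
      ((Real.pi : ℂ) ^ 2 * (|x| : ℝ)) := by
  have hnonneg {y : ℝ} (hy : y ∈ Set.Icc (0 : ℝ) (1 / 2)) :
      HasSum (fun n : ℤ => if Odd n then
        (1 - Complex.exp (2 * Real.pi * Complex.I * n * y)) / (n : ℂ) ^ 2 else 0)
      ((Real.pi : ℂ) ^ 2 * y) := by
    convert! (hasSum_odd_exp_div_sq (x := 0) (by norm_num)).sub (hasSum_odd_exp_div_sq hy) using 1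
    · funext n
      split_ifs <;> simp [sub_div]
    · push_cast
      ring
  have h := hnonneg ⟨abs_nonneg x, hx⟩
  rcases abs_cases x with ⟨hxa, -⟩ | ⟨hxa, -⟩
  · simpa only [hxa] using h
  · rw [← (Equiv.neg ℤ).hasSum_iff]
    convert! h using 1
    funext n
    simp only [Function.comp_apply, Equiv.neg_apply, odd_neg, hxa]
    push_cast
    rw [neg_sq, show 2 * Real.pi * Complex.I * -(n : ℂ) * x
      = 2 * Real.pi * Complex.I * n * -x by ring]

lemma hasSum_gridMode_sub_div_sq {N : ℤ} (hN : 0 < N) {k : ℤ} (hk : k ∈ idxs N) (i : ℤ) :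
    HasSum (fun j : ℤ => if Odd (j - i) then
        (gridMode N k i - gridMode N k j) / ((gridPt N i - gridPt N j : ℝ) : ℂ) ^ 2 else 0)
      (Real.pi / (2 * hgrid N) * |k| * gridMode N k i) := by
  have hNC : (N : ℂ) ≠ 0 := by exact_mod_cast hN.ne'
  have hNR : (0 : ℝ) < N := by exact_mod_cast hN
  have hpi : (Real.pi : ℂ) ≠ 0 := by exact_mod_cast Real.pi_ne_zero
  have hx : |(k : ℝ) / N| ≤ 1 / 2 := by
    simp only [idxs, Finset.mem_Icc] at hk
    rw [abs_div, abs_of_pos hNR, div_le_div_iff₀ hNR two_pos, one_mul]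
    have : |k| * 2 ≤ N := by rcases abs_cases k with h | h <;> omega
    exact_mod_cast this
  have h := (hasSum_odd_one_sub_exp_div_sq hx).mul_left (gridMode N k i / (hgrid N : ℂ) ^ 2)
  rw [← (Equiv.addLeft i).hasSum_iff]
  convert! h using 1
  · funext m
    simp only [Function.comp_apply, Equiv.coe_addLeft, add_sub_cancel_left, gridMode_add_right]
    split_ifs with hm
    · have hexp : Complex.exp (2 * Real.pi * Complex.I * m * ((k / N : ℝ) : ℂ))
          = gridMode N k m := by
        rw [gridMode_eq]
        congr 1
        push_cast
        ring
      rw [hexp, gridPt_sub, sub_add_cancel_left]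
      unfold gridPt
      push_cast
      ring
    · simp
  · rw [abs_div, abs_of_pos hNR]
    unfold hgrid
    push_cast
    rw [← Int.cast_abs, Complex.ofReal_intCast]
    field_simp

/-- Lemma 8.3, part (iii): `H_h` and `S_h` commute, and their
composition is given by an absolutely convergent series over the periodically
extended grid. -/
theorem discrete_hilbert_derivative_commute (N : ℤ) (hN : 2 ≤ N) (hNe : Even N)
    (f : ℤ → ℂ) (hper : ∀ j : ℤ, f (j + N) = f j)
    (h0 : dft N f 0 = 0) (hN2 : dft N f (N / 2) = 0) :
    (∀ i ∈ idxs N, Hh N (Sh N f) i = Sh N (Hh N f) i) ∧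
    (∀ i ∈ idxs N,
      Summable (fun j : ℤ =>
        ‖(if Odd (j - i) then (f i - f j) / ((gridPt N i - gridPt N j : ℝ) : ℂ) ^ 2 else 0)‖) ∧
      Hh N (Sh N f) i = ((2 * hgrid N / Real.pi : ℝ) : ℂ) *
        ∑' j : ℤ,
          (if Odd (j - i) then (f i - f j) / ((gridPt N i - gridPt N j : ℝ) : ℂ) ^ 2 else 0)) := by
  have hNpos : 0 < N := by omega
  have hinv : idft N (dft N f) = f := idft_dft hNpos hNe f hper
  have hHS : Hh N (Sh N f) = idft N fun k =>
      Hh N (gridMode N k) 0 * if k = N / 2 then 0 else Complex.I * (k : ℂ) * dft N f k :=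
    Hh_idft hNpos hNe _
  refine ⟨fun i _ => ?_, fun i _ => ?_⟩
  · rw [hHS]
    conv_rhs => rw [← hinv, Hh_idft hNpos hNe, Sh_idft hNpos hNe]
    simp only [idft_eq]
    refine Finset.sum_congr rfl fun k _ => ?_
    split_ifs <;> ring
  · have hsum : HasSum (fun j : ℤ => if Odd (j - i) then
        (f i - f j) / ((gridPt N i - gridPt N j : ℝ) : ℂ) ^ 2 else 0)
        (∑ k ∈ idxs N, dft N f k * (Real.pi / (2 * hgrid N) * |k| * gridMode N k i)) := by
      convert! hasSum_sum fun k hk =>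
        (hasSum_gridMode_sub_div_sq hNpos hk i).mul_left (dft N f k) using 1
      funext j
      split_ifs with hj
      · conv_lhs => rw [← hinv]
        simp only [idft_eq, ← Finset.sum_sub_distrib, ← mul_sub, Finset.sum_div, mul_div_assoc]
      · simp
    refine ⟨hsum.summable.norm, ?_⟩
    have hh : (hgrid N : ℂ) ≠ 0 := by
      have : (0 : ℝ) < N := by exact_mod_cast hNpos
      exact_mod_cast (div_pos Real.two_pi_pos this).ne'
    have hpi : (Real.pi : ℂ) ≠ 0 := by exact_mod_cast Real.pi_ne_zero
    rw [hsum.tsum_eq, hHS, idft_eq, Finset.mul_sum]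
    refine Finset.sum_congr rfl fun k hk => ?_
    split_ifs with hk2
    · rw [hk2, hN2]
      ring
    · rw [← mul_assoc (Hh N (gridMode N k) 0), Hh_gridMode_zero_mul_I_mul hNpos hNe hk hk2]
      push_cast
      field_simp

end
end
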